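/- Let 0 ≤ m, h ≤ n and 0 ≤ k ≤ min{n−m, m, n−h, h}. The function Φ(n,h,m,k) ∈ M^{n−m,m} is nonzero, belongs to the subspace R_{m−k}(S^{n−k,k}), is invariant under every permutation g ∈ S_n that maps A = {1,…,h} to itself, and every element of R_{m−k}(S^{n−k,k}) invariant under all such permutations is a scalar multiple of Φ(n,h,m,k). -/

import Mathlib

/-!
A function on `k`-sets invariant under the stabilizer of `A` depends only on `i = |S ∩ A|` and
`j = |S ∩ B|`, say `f S = c i j`, and then `d f = 0` is the two-term recurrence
`(h - i) c (i+1) j + (n - h - j) c i (j+1) = 0` for `i + j + 1 = k`. It has a one-dimensional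
solution space, spanned by `c i j = k! (-1)^i (h-k+1)_j (n-h-k+1)_i` (`coef`, `solution_unique`).
Counting the `k`-subsets of `Z` according to the sizes of their two parts, the image of this
solution under `R_{m-k}` takes the value `∑ C(m-w, i) C(w, j) c i j`, summed over `i + j = k`, at an
`m`-set `Z` with `|Z ∩ B| = w`; this is the Hahn polynomial value `E_k(n-h, h, m, w)` (`hahnE_eq`).
Hence `Φ` lies in `R_{m-k}(S^{n-k,k})` (`dR_baseVec`, `RT_baseVec`).

`Φ` is nonzero because one of its values can be computed: for `m ≤ h` at `w = 0`, where a single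
term survives, and for `m ≥ h` at `w = m - h`, where the Chu–Vandermonde identity evaluates the sum
to a nonzero multiple of `C(n-m, k)`.

For uniqueness, let `F = R_{m-k} f` be invariant. Replacing `f` by the sum of its translates under
the stabilizer of `A` (`stabSum`) multiplies `F` by the order `N` of the stabilizer and makes `f`
invariant, hence a multiple of the solution above; injectivity of `R_{m-k}` is not needed. That an
invariant function depends only on the two sizes is the transitivity statement
`exists_perm_of_type`.
-/

open Finset

noncomputable section

/-- The Radon transform `d : M^{n-m,m} → M^{n-m+1,m-1}`, `(df)(B) = ∑_{x ∉ B} f(B ∪ {x})`. -/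
def dR (n : ℕ) (f : Finset (Fin n) → ℂ) : Finset (Fin n) → ℂ :=
  fun B => ∑ x ∈ Bᶜ, f (insert x B)

/-- The adjoint Radon transform `d* : M^{n-m,m} → M^{n-m-1,m+1}`. -/
def dS (n : ℕ) (f : Finset (Fin n) → ℂ) : Finset (Fin n) → ℂ :=
  fun B => ∑ x ∈ B, f (B.erase x)

/-- `R_q = (d*)^q / q!`, i.e. `(R_q f)(B) = ∑_{A ⊆ B, |A| = |B| - q} f(A)`. -/
def RT (n q : ℕ) (f : Finset (Fin n) → ℂ) : Finset (Fin n) → ℂ :=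
  fun B => if q ≤ B.card then ∑ A ∈ B.powersetCard (B.card - q), f A else 0

/-- Pochhammer symbol `(t)_p = t(t+1)⋯(t+p-1)`. -/
def poch (t : ℤ) (p : ℕ) : ℤ := ∏ i ∈ Finset.range p, (t + i)

/-- Dunkl-normalized Hahn polynomial value `E_m(a,b,c,x)`. -/
def hahnE (m : ℕ) (a b c x : ℤ) : ℤ :=
  ∑ j ∈ Finset.Icc (max 0 (x - c + m)) (min (m : ℤ) x),
    (-1) ^ j.toNat * (m.choose j.toNat : ℤ) * poch (b - m + 1) j.toNat * poch (-x) j.toNat *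
      poch (a - m + 1) (m - j.toNat) * poch (x - c) (m - j.toNat)

/-- Inner product `⟨f, g⟩ = ∑ f(s) conj (g s)`. -/
def ip (n : ℕ) (f g : Finset (Fin n) → ℂ) : ℂ :=
  ∑ s : Finset (Fin n), f s * (starRingEnd ℂ) (g s)

/-- Action of `S_n`: `(g · f)(ω) = f (g⁻¹ ω)`. -/
def permAct (n : ℕ) (g : Equiv.Perm (Fin n)) (f : Finset (Fin n) → ℂ) :
    Finset (Fin n) → ℂ :=
  fun s => f (s.image ⇑g⁻¹)

/-- The block `{o+1, …, o+a}` of the ground set `{1, …, n}` (0-indexed: positions `o ≤ x < o+a`). -/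
def block (n o a : ℕ) : Finset (Fin n) :=
  Finset.filter (fun x => o ≤ (x : ℕ) ∧ (x : ℕ) < o + a) Finset.univ

/-- Tensor product relative to the partition `A = {1,…,h}`, `B = {h+1,…,n}`:
`(φ ⊗ ψ)(Z) = φ(Z ∩ A) · ψ(Z ∩ B)`. -/
def tens (n h : ℕ) (φ ψ : Finset (Fin n) → ℂ) : Finset (Fin n) → ℂ :=
  fun Z => φ (Z ∩ block n 0 h) * ψ (Z ∩ block n h (n - h))

/-- `σ_{m-w}(A) ⊗ σ_w(B)`: characteristic function of
`{Y ∈ Ω_m : |Y ∩ A| = m-w, |Y ∩ B| = w}` with `A = {1,…,h}`, `B = {h+1,…,n}`. -/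
def sigmaT (n h m w : ℕ) : Finset (Fin n) → ℂ :=
  fun Z => if (Z ∩ block n 0 h).card = m - w ∧ (Z ∩ block n h (n - h)).card = w then 1 else 0

/-- `Φ(n,h,m,k) = ∑_w E_k(n-h,h,m,w) σ_{m-w}(A) ⊗ σ_w(B)`. -/
def PhiF (n h m k : ℕ) : Finset (Fin n) → ℂ :=
  fun Z => ∑ w ∈ Finset.Icc (m - h) (min (n - h) m),
    ((hahnE k ((n : ℤ) - h) (h : ℤ) (m : ℤ) (w : ℤ) : ℤ) : ℂ) * sigmaT n h m w Z

/-! ### Pochhammer symbols and Hahn polynomial values -/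

lemma poch_succ (t : ℤ) (p : ℕ) : poch t (p + 1) = poch t p * (t + p) := by
  simp [poch, Finset.prod_range_succ]

lemma poch_neg_natCast (w j : ℕ) :
    poch (-(w : ℤ)) j = (-1) ^ j * (j.factorial * w.choose j : ℕ) := by
  induction j with
  | zero => simp [poch]
  | succ j ih =>
    rw [poch_succ, ih]
    have h := Nat.choose_succ_right_eq w j
    rw [Nat.factorial_succ]
    rcases le_or_gt j w with hj | hj
    · zify [hj] at h
      push_cast
      linear_combination (-1) ^ j * (j.factorial : ℤ) * h
    · rw [Nat.choose_eq_zero_of_lt hj, Nat.choose_eq_zero_of_lt (by omega)]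
      simp

lemma poch_natCast_succ (a i : ℕ) :
    poch ((a : ℤ) + 1) i = (i.factorial * (a + i).choose i : ℕ) := by
  induction i with
  | zero => simp [poch]
  | succ i ih =>
    rw [poch_succ, ih]
    have h := Nat.add_one_mul_choose_eq (a + i) i
    rw [Nat.factorial_succ, ← add_assoc]
    zify at h
    push_cast
    linear_combination (i.factorial : ℤ) * h

lemma poch_natCast_succ_ne_zero (a i : ℕ) : poch ((a : ℤ) + 1) i ≠ 0 := by
  rw [poch_natCast_succ]
  have : 0 < i.factorial * (a + i).choose i :=
    Nat.mul_pos (Nat.factorial_pos i) (Nat.choose_pos (by omega))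
  exact_mod_cast this.ne'

/-- The value, on a `k`-set with `i` points in `A` and `j` points in `B` (`i + j = k`), of the
invariant vector of `S^{n-k,k}`; `a = n - h - k` and `b = h - k`. -/
def coef (k a b i j : ℕ) : ℤ :=
  k.factorial * (-1) ^ i * poch ((b : ℤ) + 1) j * poch ((a : ℤ) + 1) i

/-- `coef` satisfies the recurrence that expresses `d f = 0`; for `i + j + 1 = k` the two factors
are `h - i` and `n - h - j`. -/
lemma coef_rec (k a b i j : ℕ) :
    ((b : ℤ) + 1 + j) * coef k a b (i + 1) j + ((a : ℤ) + 1 + i) * coef k a b i (j + 1) = 0 := by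
  simp only [coef, poch_succ]
  ring

/-- In the sum defining the Hahn polynomial the restriction on the range only removes zero terms,
and each remaining term is a product of two binomial coefficients and a value of `coef`. -/
lemma hahnE_eq (k a b m w : ℕ) (hw : w ≤ m) :
    hahnE k ((a : ℤ) + k) ((b : ℤ) + k) m w =
      ∑ p ∈ antidiagonal k, ((m - w).choose p.1 : ℤ) * (w.choose p.2 : ℤ) * coef k a b p.1 p.2 := by
  have term : ∀ i j : ℕ, i + j = k →
      (-1 : ℤ) ^ j * (k.choose j : ℤ) * poch ((b : ℤ) + k - k + 1) j * poch (-(w : ℤ)) j *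
        poch ((a : ℤ) + k - k + 1) i * poch ((w : ℤ) - m) i =
      ((m - w).choose i : ℤ) * (w.choose j : ℤ) * coef k a b i j := by
    intro i j hij
    have e : (w : ℤ) - m = -((m - w : ℕ) : ℤ) := by push_cast [hw]; ring
    have hk : (k.factorial : ℤ) = k.choose j * j.factorial * i.factorial := by
      have := Nat.choose_mul_factorial_mul_factorial (n := k) (k := j) (by omega)
      rw [show k - j = i by omega] at this
      exact_mod_cast this.symm
    have hs : ((-1 : ℤ) ^ j) * (-1) ^ j = 1 := by rw [← mul_pow]; simp
    rw [e, poch_neg_natCast, poch_neg_natCast, coef, hk]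
    simp only [add_sub_cancel_right]
    push_cast
    linear_combination (k.choose j : ℤ) * j.factorial * i.factorial * (m - w).choose i *
      w.choose j * (-1) ^ i * poch ((b : ℤ) + 1) j * poch ((a : ℤ) + 1) i * hs
  unfold hahnE
  symm
  rw [← Finset.sum_subset (s₁ := (antidiagonal k).filter (fun p => p.1 ≤ m - w ∧ p.2 ≤ w))
    (Finset.filter_subset _ _)]
  · refine Finset.sum_bij' (fun p _ => (p.2 : ℤ)) (fun j _ => (k - j.toNat, j.toNat)) ?_ ?_ ?_ ?_ ?_
    · rintro ⟨i, j⟩ hp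
      simp only [Finset.mem_filter, HasAntidiagonal.mem_antidiagonal, Finset.mem_Icc] at hp ⊢
      omega
    · intro j hj
      simp only [Finset.mem_filter, HasAntidiagonal.mem_antidiagonal, Finset.mem_Icc] at hj ⊢
      omega
    · rintro ⟨i, j⟩ hp
      simp only [Finset.mem_filter, HasAntidiagonal.mem_antidiagonal] at hp
      simp only [Int.toNat_natCast, Prod.mk.injEq, and_true]
      omega
    · intro j hj
      simp only [Finset.mem_Icc] at hj
      simp only
      omega
    · rintro ⟨i, j⟩ hp
      simp only [Finset.mem_filter, HasAntidiagonal.mem_antidiagonal] at hp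
      rw [← term i j hp.1]
      simp only [Int.toNat_natCast]
      rw [show k - j = i by omega]
  · rintro ⟨i, j⟩ hp hq
    simp only [Finset.mem_filter, hp, true_and, not_and_or, not_le] at hq
    rcases hq with hq | hq <;> simp [Nat.choose_eq_zero_of_lt hq]

/-- At `w = 0` only the term `j = 0` survives. -/
lemma sum_coef_ne_zero_of_le (k a b m : ℕ) (hk : k ≤ m) :
    ∑ p ∈ antidiagonal k,
      (m.choose p.1 : ℤ) * ((0 : ℕ).choose p.2 : ℤ) * coef k a b p.1 p.2 ≠ 0 := by
  rw [Finset.sum_eq_single (k, 0)]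
  · simp only [coef]
    have h1 : (m.choose k : ℤ) ≠ 0 := by exact_mod_cast (Nat.choose_pos hk).ne'
    have h2 : (k.factorial : ℤ) ≠ 0 := by exact_mod_cast k.factorial_ne_zero
    have h3 := poch_natCast_succ_ne_zero a k
    simp [poch] at h3 ⊢
    exact ⟨by omega, by exact_mod_cast h2, h3⟩
  · rintro ⟨i, j⟩ hp hne
    simp only [HasAntidiagonal.mem_antidiagonal] at hp
    have : 0 < j := by
      rcases Nat.eq_zero_or_pos j with rfl | h
      · exact absurd (by simp at hp; simp [hp]) hne
      · exact h
    simp [Nat.choose_eq_zero_of_lt this]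
  · simp

lemma ring_choose_neg (a i : ℕ) :
    Ring.choose (-((a : ℤ) + 1)) i = (-1) ^ i * ((a + i).choose i : ℤ) := by
  rw [Ring.choose_neg, show ((a : ℤ) + 1 + i - 1) = ((a + i : ℕ) : ℤ) by push_cast; ring,
    Ring.choose_natCast]
  simp [Units.smul_def, Int.coe_negOnePow_natCast]

/-- At `w = m - h` all points of `A` are used, and the sum is evaluated by the Chu–Vandermonde
identity: here `h = b + k`, `q = m - h`, `r = n - m - k`. -/
lemma sum_coef_ne_zero_of_ge (k a b q r : ℕ) (h : q + r = a) :
    ∑ p ∈ antidiagonal k,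
      ((b + k).choose p.1 : ℤ) * (q.choose p.2 : ℤ) * coef k a b p.1 p.2 ≠ 0 := by
  have key : ∀ p ∈ antidiagonal k,
      ((b + k).choose p.1 : ℤ) * (q.choose p.2 : ℤ) * coef k a b p.1 p.2 =
      (k.factorial * (k.factorial * (b + k).choose k : ℕ) : ℤ) *
        (Ring.choose (-((a : ℤ) + 1)) p.1 * Ring.choose (q : ℤ) p.2) := by
    rintro ⟨i, j⟩ hp
    simp only [HasAntidiagonal.mem_antidiagonal] at hp
    have e : (b + k).choose i * (j.factorial * (b + j).choose j) * i.factorial =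
        k.factorial * (b + k).choose k := by
      have h1 := Nat.choose_mul_factorial_mul_factorial (n := b + k) (k := i) (by omega)
      have h2 := Nat.choose_mul_factorial_mul_factorial (n := b + k) (k := k) (by omega)
      have h3 := Nat.choose_mul_factorial_mul_factorial (n := b + j) (k := j) (by omega)
      rw [show b + k - i = b + j by omega] at h1
      rw [show b + k - k = b by omega] at h2
      rw [show b + j - j = b by omega] at h3
      apply Nat.eq_of_mul_eq_mul_right b.factorial_pos
      rw [← h3] at h1
      linarith
    rw [ring_choose_neg, Ring.choose_natCast, ← e]
    simp only [coef, poch_natCast_succ]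
    push_cast
    ring
  rw [Finset.sum_congr rfl key, ← Finset.mul_sum,
    ← Ring.add_choose_eq k (Commute.all _ _),
    show -((a : ℤ) + 1) + q = -((r : ℤ) + 1) by rw [← h]; push_cast; ring, ring_choose_neg]
  have h1 : 0 < (b + k).choose k := Nat.choose_pos (by omega)
  have h2 : 0 < (r + k).choose k := Nat.choose_pos (by omega)
  have h3 := k.factorial_pos
  push_cast
  refine mul_ne_zero (mul_ne_zero ?_ (mul_ne_zero ?_ ?_)) (mul_ne_zero (by simp) ?_) <;>
    exact_mod_cast Nat.ne_of_gt (by assumption)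

/-! ### Functions of the two part sizes -/

lemma card_block_zero (n h : ℕ) (hh : h ≤ n) : (block n 0 h).card = h := by
  have e : block n 0 h = (Finset.univ : Finset (Fin h)).map (Fin.castLEEmb hh) := by
    ext x
    simp only [block, Finset.mem_filter, Finset.mem_univ, true_and, Finset.mem_map,
      Fin.castLEEmb_apply]
    constructor
    · intro hx
      exact ⟨⟨x, by omega⟩, by ext; simp⟩
    · rintro ⟨y, rfl⟩
      have := y.2
      simp
  rw [e, Finset.card_map, Finset.card_univ, Fintype.card_fin]

lemma block_eq_compl (n h : ℕ) : block n h (n - h) = (block n 0 h)ᶜ := by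
  ext x
  have := x.2
  simp only [block, Finset.mem_filter, Finset.mem_univ, true_and, Finset.mem_compl]
  omega

lemma card_inter_add_card_inter_compl {n : ℕ} (A S : Finset (Fin n)) :
    (S ∩ A).card + (S ∩ Aᶜ).card = S.card := by
  rw [← Finset.sdiff_eq_inter_compl]
  exact Finset.card_inter_add_card_sdiff S A

lemma exists_card_inter {n : ℕ} (A : Finset (Fin n)) (i j : ℕ) (hi : i ≤ A.card)
    (hj : j ≤ Aᶜ.card) : ∃ S : Finset (Fin n), (S ∩ A).card = i ∧ (S ∩ Aᶜ).card = j := by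
  obtain ⟨X, hX, rfl⟩ := Finset.exists_subset_card_eq hi
  obtain ⟨Y, hY, rfl⟩ := Finset.exists_subset_card_eq hj
  refine ⟨X ∪ Y, ?_, ?_⟩ <;> congr 1 <;> ext x <;>
    have h1 := @hX x <;> have h2 := @hY x <;> simp at h2 ⊢ <;> tauto

/-- The Radon transform of a function that depends only on the sizes of the two parts. -/
lemma dR_of_type {n : ℕ} (A : Finset (Fin n)) (f : Finset (Fin n) → ℂ) (c : ℕ → ℕ → ℂ)
    (hf : ∀ S, f S = c (S ∩ A).card (S ∩ Aᶜ).card) (T : Finset (Fin n)) :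
    dR n f T =
      ((A.card : ℂ) - (T ∩ A).card) * c ((T ∩ A).card + 1) (T ∩ Aᶜ).card +
      ((Aᶜ.card : ℂ) - (T ∩ Aᶜ).card) * c (T ∩ A).card ((T ∩ Aᶜ).card + 1) := by
  unfold dR
  rw [← Finset.sum_filter_add_sum_filter_not Tᶜ (· ∈ A)]
  have card_eq : ∀ X : Finset (Fin n),
      (((Tᶜ.filter (· ∈ X)).card : ℕ) : ℂ) = (X.card : ℂ) - (T ∩ X).card := by
    intro X
    have e : Tᶜ.filter (· ∈ X) = X \ T := by ext x; simp [and_comm]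
    have := Finset.card_inter_add_card_sdiff X T
    rw [e, Finset.inter_comm T X, ← this]
    push_cast; ring
  congr 1
  · rw [← card_eq A, ← nsmul_eq_mul]
    apply Finset.sum_eq_card_nsmul
    intro x hx
    simp only [Finset.mem_filter, Finset.mem_compl] at hx
    rw [hf, Finset.insert_inter_of_mem hx.2, Finset.insert_inter_of_notMem (by simp [hx.2]),
      Finset.card_insert_of_notMem (by simp [hx.1])]
  · have e : Tᶜ.filter (fun x => ¬ x ∈ A) = Tᶜ.filter (· ∈ Aᶜ) := by ext x; simp
    rw [e, ← card_eq Aᶜ, ← nsmul_eq_mul]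
    apply Finset.sum_eq_card_nsmul
    intro x hx
    simp only [Finset.mem_filter, Finset.mem_compl] at hx
    rw [hf, Finset.insert_inter_of_notMem hx.2, Finset.insert_inter_of_mem (by simp [hx.2]),
      Finset.card_insert_of_notMem (by simp [hx.1])]

/-- A `k`-subset of `Z` is a pair of subsets of `Z ∩ A` and of `Z ∩ Aᶜ`. -/
lemma sum_powersetCard_of_type {n : ℕ} (A Z : Finset (Fin n)) (k : ℕ) (c : ℕ → ℕ → ℂ) :
    ∑ S ∈ Z.powersetCard k, c (S ∩ A).card (S ∩ Aᶜ).card =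
      ∑ p ∈ antidiagonal k,
        ((Z ∩ A).card.choose p.1 : ℂ) * ((Z ∩ Aᶜ).card.choose p.2 : ℂ) * c p.1 p.2 := by
  rw [← Finset.sum_fiberwise_of_maps_to (t := antidiagonal k)
    (g := fun S => ((S ∩ A).card, (S ∩ Aᶜ).card))]
  · apply Finset.sum_congr rfl
    rintro ⟨i, j⟩ hp
    simp only [HasAntidiagonal.mem_antidiagonal] at hp
    have hcard : ((Z.powersetCard k).filter
        (fun S => ((S ∩ A).card, (S ∩ Aᶜ).card) = (i, j))).card =
        (((Z ∩ A).powersetCard i) ×ˢ ((Z ∩ Aᶜ).powersetCard j)).card := by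
      refine Finset.card_nbij' (fun S => (S ∩ A, S ∩ Aᶜ)) (fun q => q.1 ∪ q.2) ?_ ?_ ?_ ?_
      · intro S hS
        simp only [Finset.coe_filter, Finset.mem_powersetCard, Set.mem_ofPred_eq,
          Prod.mk.injEq] at hS
        simp only [Finset.coe_product, Set.mem_prod, Finset.mem_coe, Finset.mem_powersetCard]
        exact ⟨⟨Finset.inter_subset_inter_right hS.1.1, hS.2.1⟩,
          Finset.inter_subset_inter_right hS.1.1, hS.2.2⟩
      · rintro ⟨X, Y⟩ hq
        simp only [Finset.coe_product, Set.mem_prod, Finset.mem_coe,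
          Finset.mem_powersetCard] at hq
        obtain ⟨⟨hX, hXi⟩, hY, hYj⟩ := hq
        have e1 : (X ∪ Y) ∩ A = X := by
          ext x
          have h1 := @hX x
          have h2 := @hY x
          simp at h1 h2 ⊢
          tauto
        have e2 : (X ∪ Y) ∩ Aᶜ = Y := by
          ext x
          have h1 := @hX x
          have h2 := @hY x
          simp at h1 h2 ⊢
          tauto
        simp only [Finset.coe_filter, Finset.mem_powersetCard, Set.mem_ofPred_eq, e1, e2, hXi, hYj,
          and_true]
        refine ⟨Finset.union_subset (hX.trans Finset.inter_subset_left)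
          (hY.trans Finset.inter_subset_left), ?_⟩
        rw [← card_inter_add_card_inter_compl A, e1, e2, hXi, hYj, hp]
      · intro S _
        ext x
        simp
        tauto
      · rintro ⟨X, Y⟩ hq
        simp only [Finset.coe_product, Set.mem_prod, Finset.mem_coe,
          Finset.mem_powersetCard] at hq
        obtain ⟨⟨hX, -⟩, hY, -⟩ := hq
        ext x <;> have h1 := @hX x <;> have h2 := @hY x <;> simp at h1 h2 ⊢ <;> tauto
    rw [Finset.card_product, Finset.card_powersetCard, Finset.card_powersetCard] at hcard
    rw [Finset.sum_congr rfl (g := fun _ => c i j), Finset.sum_const, hcard, nsmul_eq_mul]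
    · push_cast; ring
    · intro S hS
      simp only [Finset.mem_filter, Prod.mk.injEq] at hS
      rw [hS.2.1, hS.2.2]
  · intro S hS
    simp only [Finset.mem_powersetCard] at hS
    simp [card_inter_add_card_inter_compl, hS.2]

/-- The values of `Φ`, with `Aᶜ` in place of the block `B`. -/
lemma PhiF_apply (n h m k : ℕ) (hh : h ≤ n) (Z : Finset (Fin n)) :
    PhiF n h m k Z = if Z.card = m then
      ((hahnE k ((n : ℤ) - h) h m ((Z ∩ (block n 0 h)ᶜ).card : ℕ) : ℤ) : ℂ) else 0 := by
  have hZ := card_inter_add_card_inter_compl (block n 0 h) Z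
  have hA : (Z ∩ block n 0 h).card ≤ h :=
    (Finset.card_le_card Finset.inter_subset_right).trans (card_block_zero n h hh).le
  have hB : (Z ∩ (block n 0 h)ᶜ).card ≤ n - h := by
    refine (Finset.card_le_card Finset.inter_subset_right).trans ?_
    rw [Finset.card_compl, card_block_zero n h hh, Fintype.card_fin]
  simp only [PhiF, sigmaT, block_eq_compl]
  split_ifs with hc
  · rw [Finset.sum_eq_single (Z ∩ (block n 0 h)ᶜ).card]
    · rw [if_pos ⟨by omega, rfl⟩, mul_one]
    · intro w _ hw
      rw [if_neg (fun hcon => hw hcon.2.symm), mul_zero]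
    · intro hw
      simp only [Finset.mem_Icc] at hw
      omega
  · refine Finset.sum_eq_zero fun w hw => ?_
    simp only [Finset.mem_Icc] at hw
    rw [if_neg (by omega), mul_zero]

lemma RT_apply_of_support {n k m : ℕ} (hk : k ≤ m) (f : Finset (Fin n) → ℂ)
    (hf : ∀ S : Finset (Fin n), S.card ≠ k → f S = 0) (Z : Finset (Fin n)) :
    RT n (m - k) f Z = if Z.card = m then ∑ S ∈ Z.powersetCard k, f S else 0 := by
  unfold RT
  split_ifs with h1 h2 h2
  · rw [h2, show m - (m - k) = k by omega]
  · refine Finset.sum_eq_zero fun S hS => hf S ?_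
    rw [(Finset.mem_powersetCard.1 hS).2]
    omega
  · omega
  · rfl

/-- The generator of the vectors of `S^{n-k,k}` invariant under the stabilizer of `A = {1,…,h}`: on
a `k`-set it is `coef` of the sizes of the two parts. -/
def baseVec (n h k : ℕ) : Finset (Fin n) → ℂ := fun S =>
  if S.card = k then
    ((coef k (n - h - k) (h - k) (S ∩ block n 0 h).card (S ∩ (block n 0 h)ᶜ).card : ℤ) : ℂ) else 0

lemma PhiF_apply_sum (n h m k : ℕ) (hh : h ≤ n) (hk3 : k ≤ n - h) (hk4 : k ≤ h)
    (Z : Finset (Fin n)) (hZ : Z.card = m) :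
    PhiF n h m k Z = ((∑ p ∈ antidiagonal k, ((Z ∩ block n 0 h).card.choose p.1 : ℤ) *
      ((Z ∩ (block n 0 h)ᶜ).card.choose p.2 : ℤ) *
        coef k (n - h - k) (h - k) p.1 p.2 : ℤ) : ℂ) := by
  have hc := card_inter_add_card_inter_compl (block n 0 h) Z
  rw [PhiF_apply n h m k hh, if_pos hZ,
    show (n : ℤ) - h = ((n - h - k : ℕ) : ℤ) + k by omega,
    show hahnE k (((n - h - k : ℕ) : ℤ) + k) (h : ℤ) = hahnE k (((n - h - k : ℕ) : ℤ) + k)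
      (((h - k : ℕ) : ℤ) + k) by congr 1; omega,
    hahnE_eq _ _ _ _ _ (by omega),
    show m - (Z ∩ (block n 0 h)ᶜ).card = (Z ∩ block n 0 h).card by omega]

lemma RT_baseVec (n h m k : ℕ) (hh : h ≤ n) (hk2 : k ≤ m) (hk3 : k ≤ n - h) (hk4 : k ≤ h) :
    RT n (m - k) (baseVec n h k) = PhiF n h m k := by
  funext Z
  rw [RT_apply_of_support hk2 _ (fun S hS => by simp [baseVec, hS])]
  split_ifs with hZ
  · rw [PhiF_apply_sum n h m k hh hk3 hk4 Z hZ]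
    push_cast
    rw [← sum_powersetCard_of_type (block n 0 h) Z k
      (fun i j => ((coef k (n - h - k) (h - k) i j : ℤ) : ℂ))]
    refine Finset.sum_congr rfl fun S hS => ?_
    rw [baseVec, if_pos (Finset.mem_powersetCard.1 hS).2]
  · rw [PhiF_apply n h m k hh, if_neg hZ]

lemma dR_baseVec (n h k : ℕ) (hh : h ≤ n) (hk3 : k ≤ n - h) (hk4 : k ≤ h) :
    dR n (baseVec n h k) = 0 := by
  funext T
  have hc := card_inter_add_card_inter_compl (block n 0 h) T
  rw [dR_of_type (block n 0 h) _ (fun i j => if i + j = k then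
    ((coef k (n - h - k) (h - k) i j : ℤ) : ℂ) else 0)
    (fun S => by simp only [baseVec, card_inter_add_card_inter_compl])]
  rw [Finset.card_compl, card_block_zero n h hh, Fintype.card_fin]
  generalize (T ∩ block n 0 h).card = i at *
  generalize (T ∩ (block n 0 h)ᶜ).card = j at *
  by_cases hT : i + j + 1 = k
  · rw [if_pos (by omega), if_pos (by omega)]
    have := coef_rec k (n - h - k) (h - k) i j
    rw [show ((h - k : ℕ) : ℤ) + 1 + j = (h : ℤ) - i by omega,
      show ((n - h - k : ℕ) : ℤ) + 1 + i = ((n - h : ℕ) : ℤ) - j by omega] at this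
    rw [Pi.zero_apply]
    exact_mod_cast this
  · rw [if_neg (by omega), if_neg (by omega)]
    simp

lemma PhiF_ne_zero (n h m k : ℕ) (hh : h ≤ n) (hm : m ≤ n)
    (hk1 : k ≤ n - m) (hk2 : k ≤ m) (hk3 : k ≤ n - h) (hk4 : k ≤ h) : PhiF n h m k ≠ 0 := by
  have hA := card_block_zero n h hh
  have hB : (block n 0 h)ᶜ.card = n - h := by
    rw [Finset.card_compl, hA, Fintype.card_fin]
  intro h0
  rcases le_total m h with hmh | hmh
  · obtain ⟨Z, h1, h2⟩ := exists_card_inter (block n 0 h) m 0 (by omega) (by omega)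
    have hZ := card_inter_add_card_inter_compl (block n 0 h) Z
    have := PhiF_apply_sum n h m k hh hk3 hk4 Z (by omega)
    rw [h0, h1, h2, Pi.zero_apply] at this
    exact sum_coef_ne_zero_of_le k (n - h - k) (h - k) m hk2 (by exact_mod_cast this.symm)
  · obtain ⟨Z, h1, h2⟩ := exists_card_inter (block n 0 h) (h - k + k) (m - h) (by omega) (by omega)
    have hZ := card_inter_add_card_inter_compl (block n 0 h) Z
    have := PhiF_apply_sum n h m k hh hk3 hk4 Z (by omega)
    rw [h0, h1, h2, Pi.zero_apply] at this
    exact sum_coef_ne_zero_of_ge k (n - h - k) (h - k) (m - h) (n - m - k) (by omega)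
      (by exact_mod_cast this.symm)

/-! ### The stabilizer of `A` and averaging -/

lemma image_compl_perm {n : ℕ} (g : Equiv.Perm (Fin n)) (T : Finset (Fin n)) :
    Tᶜ.image g = (T.image g)ᶜ := by
  ext y
  obtain ⟨x, rfl⟩ := g.surjective y
  simp

lemma image_compl_of_image {n : ℕ} {A : Finset (Fin n)} {g : Equiv.Perm (Fin n)}
    (hg : A.image g = A) : Aᶜ.image g = Aᶜ := by
  rw [image_compl_perm, hg]

lemma image_inv_of_image {n : ℕ} {A : Finset (Fin n)} {g : Equiv.Perm (Fin n)}
    (hg : A.image g = A) : A.image ⇑g⁻¹ = A := by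
  conv_lhs => rw [← hg]
  rw [Finset.image_image]
  simp

lemma card_image_inter {n : ℕ} {A : Finset (Fin n)} {g : Equiv.Perm (Fin n)}
    (hg : A.image g = A) (S : Finset (Fin n)) : (S.image g ∩ A).card = (S ∩ A).card := by
  conv_lhs => rw [← hg]
  rw [← Finset.image_inter _ _ g.injective, Finset.card_image_of_injective _ g.injective]

/-- The stabilizer of `A` is transitive on the sets with prescribed sizes of the two parts: a
permutation is obtained by matching the fibres of the colouring `x ↦ (x ∈ A, x ∈ S)`. -/
lemma exists_perm_of_type {n : ℕ} (A S T : Finset (Fin n)) (h1 : (S ∩ A).card = (T ∩ A).card)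
    (h2 : (S ∩ Aᶜ).card = (T ∩ Aᶜ).card) :
    ∃ g : Equiv.Perm (Fin n), A.image g = A ∧ S.image g = T := by
  classical
  let col : Finset (Fin n) → Fin n → Bool × Bool := fun X x => (decide (x ∈ A), decide (x ∈ X))
  have card_fib : ∀ (X : Finset (Fin n)) (u v : Bool), Fintype.card {x // col X x = (u, v)} =
      if v then (X ∩ if u then A else Aᶜ).card
      else (if u then A else Aᶜ).card - (X ∩ if u then A else Aᶜ).card := by
    intro X u v
    rw [Fintype.card_subtype]
    cases v
    · simp only [Bool.false_eq_true, if_false]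
      rw [← Finset.card_sdiff]
      congr 1
      ext x
      cases u <;> simp [col]
    · simp only [if_true]
      congr 1
      ext x
      cases u <;> simp [col, and_comm]
  have hfib : ∀ c, Nonempty ({x // col S x = c} ≃ {x // col T x = c}) := by
    rintro ⟨u, v⟩
    rw [← Fintype.card_eq, card_fib, card_fib]
    cases u <;> simp [h1, h2]
  let g : Equiv.Perm (Fin n) := Equiv.ofFiberEquiv (fun c => (hfib c).some)
  have hg : ∀ x, col T (g x) = col S x := fun x => Equiv.ofFiberEquiv_map _ x
  have hgA : ∀ x, g x ∈ A ↔ x ∈ A := fun x => by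
    have := congrArg Prod.fst (hg x)
    simpa [col] using this
  have hgS : ∀ x, g x ∈ T ↔ x ∈ S := fun x => by
    have := congrArg Prod.snd (hg x)
    simpa [col] using this
  refine ⟨g, ?_, ?_⟩
  · refine Finset.eq_of_subset_of_card_le (fun y hy => ?_)
      (Finset.card_image_of_injective _ g.injective).ge
    obtain ⟨x, hx, rfl⟩ := Finset.mem_image.1 hy
    exact (hgA x).2 hx
  · ext y
    obtain ⟨x, rfl⟩ := g.surjective y
    rw [Finset.mem_image, hgS]
    exact ⟨fun ⟨z, hz, hzx⟩ => g.injective hzx ▸ hz, fun hx => ⟨x, hx, rfl⟩⟩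

lemma exists_type_function {n : ℕ} (A : Finset (Fin n)) (f : Finset (Fin n) → ℂ)
    (hf : ∀ g : Equiv.Perm (Fin n), A.image g = A → ∀ S, f (S.image g) = f S) :
    ∃ c : ℕ → ℕ → ℂ, ∀ S, f S = c (S ∩ A).card (S ∩ Aᶜ).card := by
  let ty : Finset (Fin n) → ℕ × ℕ := fun S => ((S ∩ A).card, (S ∩ Aᶜ).card)
  have hft : Function.FactorsThrough f ty := by
    intro S T hST
    simp only [ty, Prod.mk.injEq] at hST
    obtain ⟨g, hg, rfl⟩ := exists_perm_of_type A S T hST.1 hST.2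
    exact (hf g hg S).symm
  refine ⟨fun i j => Function.extend ty f 0 (i, j), fun S => ?_⟩
  exact (hft.extend_apply 0 S).symm

/-- The sum of the translates of `f` by the stabilizer of `A`. -/
def stabSum {n : ℕ} (A : Finset (Fin n)) (f : Finset (Fin n) → ℂ) : Finset (Fin n) → ℂ :=
  fun S =>
    ∑ g ∈ Finset.univ.filter (fun g : Equiv.Perm (Fin n) => A.image g = A), f (S.image g)

lemma stabSum_image {n : ℕ} (A : Finset (Fin n)) (f : Finset (Fin n) → ℂ)
    (g : Equiv.Perm (Fin n)) (hg : A.image g = A) (S : Finset (Fin n)) :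
    stabSum A f (S.image g) = stabSum A f S := by
  have hgi := image_inv_of_image hg
  unfold stabSum
  refine Finset.sum_bij' (fun u _ => u * g) (fun u _ => u * g⁻¹) ?_ ?_ ?_ ?_ ?_
  · intro u hu
    simp only [Finset.mem_filter, Finset.mem_univ, true_and] at hu ⊢
    rw [Equiv.Perm.coe_mul, ← Finset.image_image, hg, hu]
  · intro u hu
    simp only [Finset.mem_filter, Finset.mem_univ, true_and] at hu ⊢
    rw [Equiv.Perm.coe_mul, ← Finset.image_image, hgi, hu]
  · intro u _
    simp
  · intro u _
    simp
  · intro u _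
    rw [Equiv.Perm.coe_mul, ← Finset.image_image]

lemma dR_stabSum {n : ℕ} (A : Finset (Fin n)) (f : Finset (Fin n) → ℂ) (hf : dR n f = 0) :
    dR n (stabSum A f) = 0 := by
  funext T
  simp only [dR, stabSum, Pi.zero_apply]
  rw [Finset.sum_comm]
  refine Finset.sum_eq_zero fun g _ => ?_
  have := congrFun hf (T.image g)
  simp only [dR, Pi.zero_apply] at this
  rw [← image_compl_perm, Finset.sum_image g.injective.injOn] at this
  simpa [Finset.image_insert] using this

lemma RT_stabSum {n : ℕ} (A : Finset (Fin n)) (q : ℕ) (f : Finset (Fin n) → ℂ)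
    (Z : Finset (Fin n)) :
    RT n q (stabSum A f) Z = stabSum A (RT n q f) Z := by
  have hcard : ∀ g : Equiv.Perm (Fin n), (Z.image g).card = Z.card := fun g =>
    Finset.card_image_of_injective _ g.injective
  simp only [RT, stabSum, hcard]
  split_ifs with hq
  · rw [Finset.sum_comm]
    refine Finset.sum_congr rfl fun g _ => ?_
    have e : Z.image g = Z.map g.toEmbedding := by rw [Finset.map_eq_image]; rfl
    rw [e, Finset.powersetCard_map, Finset.sum_map]
    refine Finset.sum_congr rfl fun S _ => ?_
    congr 1
    simp [Finset.mapEmbedding, Finset.map_eq_image]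
  · simp

/-- The recurrence coming from `d f = 0` has a one-dimensional solution space, because the
coefficient `n - h - j` is nonzero for `j < k`. -/
lemma solution_unique (n h k : ℕ) (hh : h ≤ n) (hk3 : k ≤ n - h) (hk4 : k ≤ h)
    (c : ℕ → ℕ → ℂ)
    (hc : ∀ i j, i + j + 1 = k →
      ((h : ℂ) - i) * c (i + 1) j + (((n - h : ℕ) : ℂ) - j) * c i (j + 1) = 0) :
    ∃ r : ℂ, ∀ i j, i + j = k → c i j = r * ((coef k (n - h - k) (h - k) i j : ℤ) : ℂ) := by
  have h0 : ((coef k (n - h - k) (h - k) k 0 : ℤ) : ℂ) ≠ 0 := by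
    have h3 := poch_natCast_succ_ne_zero (n - h - k) k
    have h4 := poch_natCast_succ_ne_zero (h - k) 0
    have h5 : (k.factorial : ℤ) ≠ 0 := by exact_mod_cast k.factorial_ne_zero
    exact_mod_cast mul_ne_zero (mul_ne_zero (mul_ne_zero h5 (by simp)) h4) h3
  refine ⟨c k 0 / ((coef k (n - h - k) (h - k) k 0 : ℤ) : ℂ), fun i j => ?_⟩
  induction j generalizing i with
  | zero =>
    rintro rfl
    simp only [add_zero] at h0 ⊢
    field_simp
  | succ j ih =>
    intro hij
    have h1 := hc i j (by omega)
    have h2 := coef_rec k (n - h - k) (h - k) i j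
    rw [show ((h - k : ℕ) : ℤ) + 1 + j = (h : ℤ) - i by omega,
      show ((n - h - k : ℕ) : ℤ) + 1 + i = ((n - h : ℕ) : ℤ) - j by omega] at h2
    have h2' : ((h : ℂ) - i) * ((coef k (n - h - k) (h - k) (i + 1) j : ℤ) : ℂ) +
        (((n - h : ℕ) : ℂ) - j) * ((coef k (n - h - k) (h - k) i (j + 1) : ℤ) : ℂ) = 0 := by
      exact_mod_cast congrArg (Int.cast : ℤ → ℂ) h2
    have hne : (((n - h : ℕ) : ℂ) - j) ≠ 0 := by
      rw [sub_ne_zero]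
      exact_mod_cast (show n - h ≠ j by omega)
    apply mul_left_cancel₀ hne
    rw [ih (i + 1) (by omega)] at h1
    linear_combination h1 - c k 0 / ((coef k (n - h - k) (h - k) k 0 : ℤ) : ℂ) * h2'

/-- Corollary 2.7: `Φ(n,h,m,k)` is a nonzero element of `R_{m-k}(S^{n-k,k})`, invariant under
the stabilizer of `A = {1,…,h}`, and spans the space of such invariant vectors. -/
theorem stmt10 (n h m k : ℕ) (hn : 1 ≤ n) (hh : h ≤ n) (hm : m ≤ n)
    (hk1 : k ≤ n - m) (hk2 : k ≤ m) (hk3 : k ≤ n - h) (hk4 : k ≤ h) :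
    PhiF n h m k ≠ 0 ∧
    (∃ f : Finset (Fin n) → ℂ, (∀ s : Finset (Fin n), s.card ≠ k → f s = 0) ∧
      dR n f = 0 ∧ RT n (m - k) f = PhiF n h m k) ∧
    (∀ g : Equiv.Perm (Fin n), Finset.image ⇑g (block n 0 h) = block n 0 h →
      permAct n g (PhiF n h m k) = PhiF n h m k) ∧
    (∀ F : Finset (Fin n) → ℂ,
      (∃ f : Finset (Fin n) → ℂ, (∀ s : Finset (Fin n), s.card ≠ k → f s = 0) ∧
        dR n f = 0 ∧ RT n (m - k) f = F) →
      (∀ g : Equiv.Perm (Fin n), Finset.image ⇑g (block n 0 h) = block n 0 h →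
        permAct n g F = F) →
      ∃ c : ℂ, F = c • PhiF n h m k) := by
  have hA := card_block_zero n h hh
  have hB : (block n 0 h)ᶜ.card = n - h := by
    rw [Finset.card_compl, hA, Fintype.card_fin]
  refine ⟨PhiF_ne_zero n h m k hh hm hk1 hk2 hk3 hk4,
    ⟨baseVec n h k, fun S hS => by simp [baseVec, hS], dR_baseVec n h k hh hk3 hk4,
      RT_baseVec n h m k hh hk2 hk3 hk4⟩, ?_, ?_⟩
  · intro g hg
    funext Z
    have hgi := image_inv_of_image hg
    simp only [permAct]
    rw [PhiF_apply n h m k hh, PhiF_apply n h m k hh,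
      card_image_inter (image_compl_of_image hgi),
      Finset.card_image_of_injective _ (g⁻¹).injective]
  · rintro F ⟨f, hsupp, hd, rfl⟩ hinv
    obtain ⟨c, hc⟩ := exists_type_function (block n 0 h) (stabSum (block n 0 h) f)
      (fun g hg S => stabSum_image _ f g hg S)
    have hdc := dR_stabSum (block n 0 h) f hd
    obtain ⟨r, hr⟩ := solution_unique n h k hh hk3 hk4 c (by
      intro i j hij
      obtain ⟨T, rfl, rfl⟩ := exists_card_inter (block n 0 h) i j (by omega) (by omega)
      have := dR_of_type (block n 0 h) _ c hc T
      rw [hA, hB, hdc, Pi.zero_apply] at this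
      exact this.symm)
    have hbase : stabSum (block n 0 h) f = r • baseVec n h k := by
      funext S
      rw [Pi.smul_apply, smul_eq_mul, baseVec]
      split_ifs with hS
      · rw [hc, hr _ _ (by rw [card_inter_add_card_inter_compl, hS])]
      · rw [mul_zero, stabSum]
        refine Finset.sum_eq_zero fun g _ => hsupp _ ?_
        rwa [Finset.card_image_of_injective _ g.injective]
    set N : ℕ := (Finset.univ.filter
      (fun g : Equiv.Perm (Fin n) => (block n 0 h).image g = block n 0 h)).card with hN
    have hN0 : (N : ℂ) ≠ 0 := by
      have : 0 < N := Finset.card_pos.2 ⟨1, by simp⟩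
      exact_mod_cast this.ne'
    refine ⟨r / N, ?_⟩
    funext Z
    -- Since `F = R f` is invariant, `R` of the sum of translates is `N • F`.
    have h1 : RT n (m - k) (stabSum (block n 0 h) f) Z = N * RT n (m - k) f Z := by
      rw [RT_stabSum, stabSum, hN, ← nsmul_eq_mul]
      refine Finset.sum_eq_card_nsmul fun g hg => ?_
      simp only [Finset.mem_filter, Finset.mem_univ, true_and] at hg
      have := congrFun (hinv g⁻¹ (image_inv_of_image hg)) Z
      simpa [permAct] using this
    have h2 : RT n (m - k) (r • baseVec n h k) Z = r * PhiF n h m k Z := by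
      rw [← RT_baseVec n h m k hh hk2 hk3 hk4]
      simp only [RT, Pi.smul_apply, smul_eq_mul]
      split_ifs
      · rw [Finset.mul_sum]
      · simp
    rw [hbase, h2] at h1
    rw [Pi.smul_apply, smul_eq_mul]
    field_simp
    linear_combination -h1

end
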